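/- For every m ≥ 2 there exists n ≥ 2 such that the disjoint union K_n ⊔ N_m (a complete graph on n vertices together with m isolated vertices) satisfies ϖ(K_n ∪ N_m) = 2; that is, there is a Marcello chain of length 2 from K_n ⊔ N_m to the complete graph on its n + m vertices, but no Marcello step from K_n ⊔ N_m to that complete graph. -/

import Mathlib

open SimpleGraph

attribute [local instance] Classical.propDecidable

/-- The degree of a vertex. -/
noncomputable def mdeg {V : Type*} (G : SimpleGraph V) (v : V) : ℕ :=
  (G.neighborSet v).ncard

/-- `G'` is obtained from `G` by a Marcello step. -/
def MarcelloStep {V : Type*} [Fintype V] (G G' : SimpleGraph V) : Prop :=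
  G ≤ G' ∧ ∃ f : Sym2 V → V,
    (∀ e ∈ G'.edgeSet \ G.edgeSet, f e ∈ e) ∧
    (∀ v : V, (∃ e ∈ G'.edgeSet \ G.edgeSet, f e = v) →
        0 < mdeg G v ∧ mdeg G v < Fintype.card V - 1) ∧
    (∀ v : V, ((G'.edgeSet \ G.edgeSet) ∩ {e | f e = v}).ncard ≤ mdeg G v)

/-- There is a Marcello chain of length `k` from `G` to `H`. -/
def MarcelloChain {V : Type*} [Fintype V] (G H : SimpleGraph V) (k : ℕ) : Prop :=
  ∃ c : ℕ → SimpleGraph V, c 0 = G ∧ c k = H ∧ ∀ i < k, MarcelloStep (c i) (c (i + 1))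

/-- The Marcello number `ϖ(G)`. -/
noncomputable def marcelloNumber {V : Type*} [Fintype V] (G : SimpleGraph V) : ℕ :=
  sInf {k | MarcelloChain G (⊤ : SimpleGraph V) k}

/-- The sum of degrees over vertices `v` with `0 < deg v < n - 1`. -/
noncomputable def marcelloSum {V : Type*} [Fintype V] (G : SimpleGraph V) : ℕ :=
  ∑ v ∈ Finset.univ.filter
      (fun v => 0 < mdeg G v ∧ mdeg G v < Fintype.card V - 1), mdeg G v

/-!
If every new edge has an endpoint whose degree at most doubles, that endpoint can initiate it, so
all the new edges can be added in a single Marcello step. For `m < n` this applies twice: passing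
from `K_n ⊔ N_m` to the join of `K_n` and `N_m` raises the degree of a clique vertex from `n - 1`
to `n + m - 1 ≤ 2 (n - 1)`, and passing from the join to `K_{n + m}` raises the degree of a
remaining vertex from `n` to `n + m - 1 ≤ 2 n`. One step does not suffice, since an edge between
two isolated vertices has no possible initiator.
-/

section Degree

variable {V : Type*} {G G' : SimpleGraph V} {u v : V}

theorem mdeg_bot (v : V) : mdeg (⊥ : SimpleGraph V) v = 0 := by
  rw [mdeg, neighborSet_bot, Set.ncard_empty]

theorem mdeg_eq_degree (G : SimpleGraph V) (v : V) [Fintype (G.neighborSet v)] :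
    mdeg G v = G.degree v := by
  rw [mdeg, Set.ncard_eq_toFinset_card', ← G.card_neighborFinset_eq_degree, neighborFinset]

theorem mdeg_top [Fintype V] (v : V) : mdeg (⊤ : SimpleGraph V) v = Fintype.card V - 1 :=
  (mdeg_eq_degree _ v).trans (complete_graph_degree v)

theorem mdeg_lt_card [Fintype V] (G : SimpleGraph V) (v : V) : mdeg G v < Fintype.card V :=
  mdeg_eq_degree G v ▸ G.degree_lt_card_verts v

theorem ncard_incidenceSet_eq_mdeg (G : SimpleGraph V) (v : V) :
    (G.incidenceSet v).ncard = mdeg G v :=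
  Nat.card_congr (G.incidenceSetEquivNeighborSet v)

variable [Finite V]

theorem mdeg_pos_of_adj (h : G.Adj u v) : 0 < mdeg G u :=
  (Set.ncard_pos (Set.toFinite _)).2 ⟨v, h⟩

theorem ncard_incident_edgeSet_sdiff_add_mdeg (hle : G ≤ G') (v : V) :
    ((G'.edgeSet \ G.edgeSet) ∩ {e | v ∈ e}).ncard + mdeg G v = mdeg G' v := by
  have hnew : (G'.edgeSet \ G.edgeSet) ∩ {e | v ∈ e} = G'.incidenceSet v \ G.incidenceSet v := by
    ext e
    simp only [incidenceSet, Set.mem_inter_iff, Set.mem_sdiff, Set.mem_ofPred_eq]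
    tauto
  have hsub : G.incidenceSet v ⊆ G'.incidenceSet v :=
    fun _ he => ⟨edgeSet_mono hle he.1, he.2⟩
  rw [hnew, ← ncard_incidenceSet_eq_mdeg G, ← ncard_incidenceSet_eq_mdeg G',
    Set.ncard_sdiff_add_ncard_of_subset hsub]

theorem mdeg_lt_mdeg_of_mem_edgeSet_sdiff (hle : G ≤ G') {e : Sym2 V}
    (he : e ∈ G'.edgeSet \ G.edgeSet) (hv : v ∈ e) : mdeg G v < mdeg G' v := by
  have hpos : 0 < ((G'.edgeSet \ G.edgeSet) ∩ {e | v ∈ e}).ncard :=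
    (Set.ncard_pos (Set.toFinite _)).2 ⟨e, he, hv⟩
  have hcount := ncard_incident_edgeSet_sdiff_add_mdeg hle v
  omega

end Degree

section Step

variable {V : Type*} [Fintype V] {G G' H : SimpleGraph V} {u v : V}

theorem marcelloStep_of_exists_mdeg_le_two_mul (hle : G ≤ G')
    (h : ∀ e ∈ G'.edgeSet \ G.edgeSet, ∃ v ∈ e, mdeg G' v ≤ 2 * mdeg G v) :
    MarcelloStep G G' := by
  have hinit (e : Sym2 V) :
      ∃ v ∈ e, e ∈ G'.edgeSet \ G.edgeSet → mdeg G' v ≤ 2 * mdeg G v := by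
    by_cases he : e ∈ G'.edgeSet \ G.edgeSet
    · obtain ⟨v, hv, hdeg⟩ := h e he
      exact ⟨v, hv, fun _ => hdeg⟩
    · exact ⟨_, e.out_fst_mem, fun he' => absurd he' he⟩
  choose f hf_mem hf_deg using hinit
  refine ⟨hle, f, fun e _ => hf_mem e, ?_, fun v => ?_⟩
  · rintro _ ⟨e, he, rfl⟩
    have hlt := mdeg_lt_mdeg_of_mem_edgeSet_sdiff hle he (hf_mem e)
    have hcard := mdeg_lt_card G' (f e)
    have hdeg := hf_deg e he
    omega
  · rcases ((G'.edgeSet \ G.edgeSet) ∩ {e | f e = v}).eq_empty_or_nonempty with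
      hempty | ⟨e, he, rfl⟩
    · simp [hempty]
    · have hincident : ((G'.edgeSet \ G.edgeSet) ∩ {e' | f e' = f e}).ncard ≤
          ((G'.edgeSet \ G.edgeSet) ∩ {e' | f e ∈ e'}).ncard :=
        Set.ncard_le_ncard fun e' he' => ⟨he'.1, he'.2 ▸ hf_mem e'⟩
      have hcount := ncard_incident_edgeSet_sdiff_add_mdeg hle (f e)
      have hdeg := hf_deg e he
      omega

theorem marcelloStep_refl (G : SimpleGraph V) : MarcelloStep G G :=
  marcelloStep_of_exists_mdeg_le_two_mul le_rfl fun _ he => absurd he.1 he.2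

theorem MarcelloStep.mdeg_pos_or_mdeg_pos (hstep : MarcelloStep G G') (huv : G'.Adj u v) :
    0 < mdeg G u ∨ 0 < mdeg G v := by
  by_cases hG : G.Adj u v
  · exact .inl (mdeg_pos_of_adj hG)
  · obtain ⟨-, f, hf_mem, hf_deg, -⟩ := hstep
    have hnew : s(u, v) ∈ G'.edgeSet \ G.edgeSet := ⟨huv, hG⟩
    have hpos := (hf_deg _ ⟨_, hnew, rfl⟩).1
    rcases Sym2.mem_iff.1 (hf_mem _ hnew) with hu | hv
    · exact .inl (hu ▸ hpos)
    · exact .inr (hv ▸ hpos)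

theorem marcelloChain_zero_iff : MarcelloChain G H 0 ↔ G = H :=
  ⟨fun ⟨_, hG, hH, _⟩ => hG.symm.trans hH, fun h => ⟨fun _ => G, rfl, h, by simp⟩⟩

theorem marcelloChain_succ_iff {k : ℕ} :
    MarcelloChain G H (k + 1) ↔ ∃ M, MarcelloStep G M ∧ MarcelloChain M H k := by
  constructor
  · rintro ⟨c, rfl, hH, hstep⟩
    exact ⟨c 1, hstep 0 k.succ_pos, fun i => c (i + 1), rfl, hH,
      fun i hi => hstep (i + 1) (by omega)⟩
  · rintro ⟨M, hGM, c, rfl, hH, hstep⟩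
    refine ⟨fun | 0 => G | i + 1 => c i, rfl, hH, ?_⟩
    rintro (_ | i) hi
    · exact hGM
    · exact hstep i (by omega)

theorem marcelloChain_one_iff : MarcelloChain G H 1 ↔ MarcelloStep G H := by
  simp [marcelloChain_succ_iff, marcelloChain_zero_iff]

theorem MarcelloStep.marcelloChain_two {M : SimpleGraph V} (hGM : MarcelloStep G M)
    (hMH : MarcelloStep M H) : MarcelloChain G H 2 :=
  marcelloChain_succ_iff.2 ⟨M, hGM, marcelloChain_one_iff.2 hMH⟩

theorem marcelloNumber_eq_two (hchain : MarcelloChain G ⊤ 2) (hstep : ¬ MarcelloStep G ⊤) :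
    marcelloNumber G = 2 := by
  refine le_antisymm (Nat.sInf_le hchain) (le_csInf ⟨2, hchain⟩ ?_)
  rintro (_ | _ | k) hk
  · exact absurd (marcelloChain_zero_iff.1 hk ▸ marcelloStep_refl G) hstep
  · exact absurd (marcelloChain_one_iff.1 hk) hstep
  · omega

end Step

/-- The join of two graphs: their disjoint union together with all edges between the two sides. The
join of `K_n` and `N_m` is the intermediate graph of the chain from `K_n ⊔ N_m` to `K_{n + m}`. -/
def graphJoin {α β : Type*} (G : SimpleGraph α) (H : SimpleGraph β) : SimpleGraph (α ⊕ β) :=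
  (G ⊕g H) ⊔ completeBipartiteGraph α β

section Sum

variable {α β : Type*} (G : SimpleGraph α) (H : SimpleGraph β)

theorem mdeg_sum_inl (a : α) : mdeg (G ⊕g H) (.inl a) = mdeg G a := by
  have hnbr : (G ⊕g H).neighborSet (.inl a) = Sum.inl '' G.neighborSet a := by
    ext (x | x) <;> simp
  rw [mdeg, hnbr, Set.ncard_image_of_injective _ Sum.inl_injective, mdeg]

theorem mdeg_sum_inr (b : β) : mdeg (G ⊕g H) (.inr b) = mdeg H b := by
  have hnbr : (G ⊕g H).neighborSet (.inr b) = Sum.inr '' H.neighborSet b := by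
    ext (x | x) <;> simp
  rw [mdeg, hnbr, Set.ncard_image_of_injective _ Sum.inr_injective, mdeg]

theorem mdeg_graphJoin_inl [Finite α] [Fintype β] (a : α) :
    mdeg (graphJoin G H) (.inl a) = mdeg G a + Fintype.card β := by
  have hnbr : (graphJoin G H).neighborSet (.inl a) =
      Sum.inl '' G.neighborSet a ∪ Sum.inr '' Set.univ := by
    ext (x | x) <;> simp [graphJoin]
  rw [mdeg, hnbr, Set.ncard_union_eq Set.disjoint_image_inl_image_inr,
    Set.ncard_image_of_injective _ Sum.inl_injective,
    Set.ncard_image_of_injective _ Sum.inr_injective, Set.ncard_univ, Nat.card_eq_fintype_card,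
    mdeg]

theorem mdeg_graphJoin_inr [Fintype α] [Finite β] (b : β) :
    mdeg (graphJoin G H) (.inr b) = Fintype.card α + mdeg H b := by
  have hnbr : (graphJoin G H).neighborSet (.inr b) =
      Sum.inl '' Set.univ ∪ Sum.inr '' H.neighborSet b := by
    ext (x | x) <;> simp [graphJoin]
  rw [mdeg, hnbr, Set.ncard_union_eq Set.disjoint_image_inl_image_inr,
    Set.ncard_image_of_injective _ Sum.inl_injective,
    Set.ncard_image_of_injective _ Sum.inr_injective, Set.ncard_univ, Nat.card_eq_fintype_card,
    mdeg]

variable [Fintype α] [Fintype β]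

variable {G} in
theorem marcelloStep_sum_graphJoin (hG : ∀ a, Fintype.card β ≤ mdeg G a) :
    MarcelloStep (G ⊕g H) (graphJoin G H) := by
  have hdeg (a : α) : mdeg (graphJoin G H) (.inl a) ≤ 2 * mdeg (G ⊕g H) (.inl a) := by
    rw [mdeg_graphJoin_inl, mdeg_sum_inl]
    have hle := hG a
    omega
  refine marcelloStep_of_exists_mdeg_le_two_mul le_sup_left fun e he => ?_
  induction e with | _ x y
  rcases x with a | b
  · exact ⟨_, Sym2.mem_mk_left _ _, hdeg a⟩
  rcases y with a | b'
  · exact ⟨_, Sym2.mem_mk_right _ _, hdeg a⟩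
  · simp [graphJoin] at he

theorem marcelloStep_graphJoin_top (hcard : Fintype.card β ≤ Fintype.card α + 1) :
    MarcelloStep (graphJoin (⊤ : SimpleGraph α) H) ⊤ := by
  have hdeg (b : β) :
      mdeg (⊤ : SimpleGraph (α ⊕ β)) (.inr b) ≤
        2 * mdeg (graphJoin (⊤ : SimpleGraph α) H) (.inr b) := by
    rw [mdeg_top, Fintype.card_sum, mdeg_graphJoin_inr]
    omega
  refine marcelloStep_of_exists_mdeg_le_two_mul le_top fun e he => ?_
  induction e with | _ x y
  rcases x with a | b
  · rcases y with a' | b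
    · simp [graphJoin] at he
    · exact ⟨_, Sym2.mem_mk_right _ _, hdeg b⟩
  · exact ⟨_, Sym2.mem_mk_left _ _, hdeg b⟩

theorem marcelloChain_top_sum_top_two (hcard : Fintype.card β < Fintype.card α) :
    MarcelloChain ((⊤ : SimpleGraph α) ⊕g H) ⊤ 2 := by
  have hjoin : MarcelloStep ((⊤ : SimpleGraph α) ⊕g H) (graphJoin ⊤ H) :=
    marcelloStep_sum_graphJoin H fun a => by rw [mdeg_top]; omega
  exact hjoin.marcelloChain_two (marcelloStep_graphJoin_top H (by omega))

theorem not_marcelloStep_sum_bot_top [Nontrivial β] :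
    ¬ MarcelloStep (G ⊕g (⊥ : SimpleGraph β)) ⊤ := by
  intro hstep
  obtain ⟨b, b', hne⟩ := exists_pair_ne β
  have hadj : (⊤ : SimpleGraph (α ⊕ β)).Adj (.inr b) (.inr b') := by simpa using hne
  simpa [mdeg_sum_inr, mdeg_bot] using hstep.mdeg_pos_or_mdeg_pos hadj

end Sum

theorem exists_marcello_union_complete_null_general {α β : Type*} [Fintype α] [Fintype β]
    [Nontrivial β] (hcard : Fintype.card β < Fintype.card α) :
    marcelloNumber ((⊤ : SimpleGraph α) ⊕g (⊥ : SimpleGraph β)) = 2 ∧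
      MarcelloChain ((⊤ : SimpleGraph α) ⊕g (⊥ : SimpleGraph β)) ⊤ 2 ∧
      ¬ MarcelloStep ((⊤ : SimpleGraph α) ⊕g (⊥ : SimpleGraph β)) ⊤ :=
  have hchain := marcelloChain_top_sum_top_two ⊥ hcard
  have hstep := not_marcelloStep_sum_bot_top ⊤
  ⟨marcelloNumber_eq_two hchain hstep, hchain, hstep⟩

/-- For every `m ≥ 2` there exists `n ≥ 2` with `ϖ(K_n ∪ N_m) = 2`: there is a Marcello
chain of length `2` to the complete graph, but no single Marcello step completes it. -/
theorem exists_marcello_union_complete_null (m : ℕ) (hm : 2 ≤ m) :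
    ∃ n : ℕ, 2 ≤ n ∧
      marcelloNumber ((⊤ : SimpleGraph (Fin n)) ⊕g (⊥ : SimpleGraph (Fin m))) = 2 ∧
      MarcelloChain ((⊤ : SimpleGraph (Fin n)) ⊕g (⊥ : SimpleGraph (Fin m)))
        (⊤ : SimpleGraph (Fin n ⊕ Fin m)) 2 ∧
      ¬ MarcelloStep ((⊤ : SimpleGraph (Fin n)) ⊕g (⊥ : SimpleGraph (Fin m)))
        (⊤ : SimpleGraph (Fin n ⊕ Fin m)) := by
  have : Nontrivial (Fin m) := Fin.nontrivial_iff_two_le.2 hm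
  exact ⟨m + 1, by omega, exists_marcello_union_complete_null_general (by simp)⟩
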